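/- Let A ∈ ℝ^{n×n}, C ∈ ℝ^{m×n}, and let P ∈ ℝ^{n×n} be symmetric positive definite and satisfy the algebraic Riccati equation AP + PAᵀ + I_n − PCᵀCP = 0. Then for every real σ ≥ 1 and every ω ∈ ℝ, the complex matrix A − (σ + iω)PCᵀC is Hurwitz, i.e. every eigenvalue of A − (σ + iω)PCᵀC has strictly negative real part. -/

import Mathlib

open Matrix

/-!
Put `M = A - sPR`. The Riccati equation `AP + PAᴴ + Q = PRP` turns into the Lyapunov equation
`MP + PMᴴ = -(Q + (2 Re s - 1) PRP)`, in which the imaginary part of `s` has cancelled and whose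
right-hand side is negative definite once `Re s ≥ 1/2`. Evaluating it on an eigenvector `w` of `Mᴴ`
for the eigenvalue `star μ` gives `2 Re μ · wᴴPw < 0`, and `wᴴPw ≥ 0` forces `Re μ < 0`.
-/

/-- A complex matrix is Hurwitz if all its eigenvalues lie in the open left half-plane. The
eigenvalues are encoded as the spectrum over `ℂ`. -/
def IsHurwitz {n : Type*} [Fintype n] [DecidableEq n] (M : Matrix n n ℂ) : Prop :=
  ∀ μ ∈ spectrum ℂ M, μ.re < 0

/-- `P` solves the algebraic Riccati equation with drift `A`, constant term `Q` and quadratic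
coefficient `R`; for real data with `Q = 1` and `R = CᵀC` this is `AP + PAᵀ + I - PCᵀCP = 0`. No
symmetry or definiteness of `Q`, `R`, `P` is built in. -/
def IsRiccatiSolution {n α : Type*} [Fintype n] [Ring α] [StarRing α]
    (A Q R P : Matrix n n α) : Prop :=
  A * P + P * Aᴴ + Q - P * R * P = 0

section StarRing

variable {n α β : Type*} [Fintype n]

theorem IsRiccatiSolution.map [Ring α] [StarRing α] [Ring β] [StarRing β]
    {A Q R P : Matrix n n α} (h : IsRiccatiSolution A Q R P) (f : α →+* β)
    (hf : Function.Semiconj f star star) :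
    IsRiccatiSolution (A.map f) (Q.map f) (R.map f) (P.map f) := by
  have hmap := congrArg (fun X : Matrix n n α => X.map f) h
  simpa only [IsRiccatiSolution, Matrix.map_sub f (map_sub f), Matrix.map_add f (map_add f),
    Matrix.map_mul, conjTranspose_map f hf, Matrix.map_zero f (map_zero f)] using hmap

theorem IsRiccatiSolution.neg_closedLoop_lyapunov [CommRing α] [StarRing α]
    {A Q R P : Matrix n n α} (h : IsRiccatiSolution A Q R P) (hP : P.IsHermitian)
    (hR : R.IsHermitian) (s : α) :
    -((A - s • (P * R)) * P + P * (A - s • (P * R))ᴴ) = Q + (s + star s - 1) • (P * R * P) := by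
  have hclosed : (A - s • (P * R))ᴴ = Aᴴ - star s • (R * P) := by
    rw [conjTranspose_sub, conjTranspose_smul, conjTranspose_mul, hP.eq, hR.eq]
  have hQ : Q = P * R * P - (A * P + P * Aᴴ) :=
    eq_sub_of_add_eq' (sub_eq_zero.mp h)
  rw [hclosed, hQ, sub_mul, mul_sub, smul_mul_assoc, mul_smul_comm, ← mul_assoc P R P]
  module

theorem star_dotProduct_lyapunov_mulVec [CommRing α] [StarRing α] (M P : Matrix n n α)
    {w : n → α} {μ : α} (hw : Mᴴ *ᵥ w = star μ • w) :
    star w ⬝ᵥ ((M * P + P * Mᴴ) *ᵥ w) = (μ + star μ) * (star w ⬝ᵥ (P *ᵥ w)) := by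
  have hleft : star w ᵥ* M = μ • star w := by
    rw [← conjTranspose_conjTranspose M, ← star_mulVec, hw, star_smul, star_star]
  rw [add_mulVec, dotProduct_add, ← mulVec_mulVec, ← mulVec_mulVec, dotProduct_mulVec _ M, hleft,
    hw, mulVec_smul, smul_dotProduct, dotProduct_smul, smul_eq_mul, smul_eq_mul, add_mul]

end StarRing

theorem exists_mulVec_eq_smul_of_mem_spectrum {n K : Type*} [Fintype n] [DecidableEq n] [Field K]
    {M : Matrix n n K} {μ : K} (hμ : μ ∈ spectrum K M) : ∃ w ≠ 0, M *ᵥ w = μ • w := by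
  rw [← spectrum_toLin', ← Module.End.hasEigenvalue_iff_mem_spectrum] at hμ
  obtain ⟨w, hw⟩ := hμ.exists_hasEigenvector
  exact ⟨w, hw.2, hw.apply_eq_smul⟩

open scoped ComplexOrder MatrixOrder in
theorem posSemidef_map {n 𝕜 S : Type*} [Finite n] [RCLike 𝕜] [Ring S] [PartialOrder S]
    [StarRing S] [StarOrderedRing S] {P : Matrix n n 𝕜} (hP : P.PosSemidef) (f : 𝕜 →+* S)
    (hf : Function.Semiconj f star star) : (P.map f).PosSemidef := by
  classical
  have := Fintype.ofFinite n
  obtain ⟨B, rfl⟩ := CStarAlgebra.nonneg_iff_eq_star_mul_self.mp hP.nonneg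
  rw [star_eq_conjTranspose, Matrix.map_mul, conjTranspose_map f hf]
  exact posSemidef_conjTranspose_mul_self _

open scoped ComplexOrder in
theorem posDef_map {n 𝕜 𝕜' : Type*} [Finite n] [RCLike 𝕜] [RCLike 𝕜'] {P : Matrix n n 𝕜}
    (hP : P.PosDef) (f : 𝕜 →+* 𝕜') (hf : Function.Semiconj f star star) : (P.map f).PosDef := by
  classical
  have := Fintype.ofFinite n
  exact (posSemidef_map hP.posSemidef f hf).posDef_iff_isUnit.mpr (hP.isUnit.map f.mapMatrix)

section Hurwitz

open scoped ComplexOrder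

variable {n : Type*} [Fintype n] [DecidableEq n]

theorem isHurwitz_of_posDef_neg_lyapunov {M P : Matrix n n ℂ} (hP : P.PosSemidef)
    (hM : (-(M * P + P * Mᴴ)).PosDef) : IsHurwitz M := by
  intro μ hμ
  have hμ_star : star μ ∈ spectrum ℂ Mᴴ := by
    rwa [← star_eq_conjTranspose, spectrum.map_star, Set.star_mem_star]
  obtain ⟨w, hw_ne, hw⟩ := exists_mulVec_eq_smul_of_mem_spectrum hμ_star
  have hP_nonneg : 0 ≤ (star w ⬝ᵥ (P *ᵥ w)).re :=
    (Complex.le_def.mp (hP.dotProduct_mulVec_nonneg w)).1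
  have hform : (star w ⬝ᵥ ((M * P + P * Mᴴ) *ᵥ w)).re < 0 := by
    have hpos := (Complex.lt_def.mp (hM.dotProduct_mulVec_pos hw_ne)).1
    rwa [neg_mulVec, dotProduct_neg, Complex.neg_re, Complex.zero_re, neg_pos] at hpos
  have hre : 2 * μ.re * (star w ⬝ᵥ (P *ᵥ w)).re < 0 := by
    rwa [star_dotProduct_lyapunov_mulVec M P hw, Complex.star_def, Complex.add_conj,
      Complex.re_ofReal_mul] at hform
  linarith [neg_of_mul_neg_left hre hP_nonneg]

theorem riccati_complex_shift_hurwitz_general {A Q R P : Matrix n n ℂ}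
    (h : IsRiccatiSolution A Q R P) (hQ : Q.PosDef) (hR : R.PosSemidef) (hP : P.PosSemidef)
    {s : ℂ} (hs : 1 / 2 ≤ s.re) : IsHurwitz (A - s • (P * R)) := by
  apply isHurwitz_of_posDef_neg_lyapunov hP
  rw [h.neg_closedLoop_lyapunov hP.isHermitian hR.isHermitian]
  have hcoeff : 0 ≤ s + star s - 1 := by
    rw [Complex.star_def, Complex.add_conj]
    exact_mod_cast (by linarith : 0 ≤ 2 * s.re - 1)
  have hPRP : (P * R * P).PosSemidef := by
    simpa only [hP.isHermitian.eq] using hR.mul_mul_conjTranspose_same P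
  exact hQ.add_posSemidef (hPRP.smul hcoeff)

theorem IsRiccatiSolution.isHurwitz_map_ofReal {A Q R P : Matrix n n ℝ}
    (h : IsRiccatiSolution A Q R P) (hQ : Q.PosDef) (hR : R.PosSemidef) (hP : P.PosSemidef)
    {s : ℂ} (hs : 1 / 2 ≤ s.re) :
    IsHurwitz (A.map Complex.ofReal - s • (P * R).map Complex.ofReal) := by
  have hstar : Function.Semiconj Complex.ofRealHom star star :=
    fun x => (Complex.conj_ofReal x).symm
  have hH := riccati_complex_shift_hurwitz_general (h.map _ hstar) (posDef_map hQ _ hstar)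
    (posSemidef_map hR _ hstar) (posSemidef_map hP _ hstar) hs
  rwa [← Matrix.map_mul] at hH

end Hurwitz

/-- If `P` is a symmetric positive-definite solution of the algebraic Riccati equation
`AP + PAᵀ + I - PCᵀCP = 0`, then for every real `σ ≥ 1` and `ω ∈ ℝ` the complex matrix
`A - (σ + iω)PCᵀC` is Hurwitz. -/
theorem riccati_complex_shift_hurwitz
    (n m : ℕ) (A : Matrix (Fin n) (Fin n) ℝ) (C : Matrix (Fin m) (Fin n) ℝ)
    (P : Matrix (Fin n) (Fin n) ℝ) (hPsymm : Pᵀ = P) (hPpos : P.PosDef)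
    (hRiccati : A * P + P * Aᵀ + 1 - P * Cᵀ * C * P = 0) :
    ∀ σ : ℝ, 1 ≤ σ → ∀ ω : ℝ,
      ∀ μ ∈ spectrum ℂ (A.map Complex.ofReal
          - ((σ : ℂ) + (ω : ℂ) * Complex.I) • ((P * Cᵀ * C).map Complex.ofReal)),
        μ.re < 0 := by
  intro σ hσ ω
  have hric : IsRiccatiSolution A 1 (Cᵀ * C) P := by
    rwa [IsRiccatiSolution, conjTranspose_eq_transpose_of_trivial, ← Matrix.mul_assoc]
  have hshift : 1 / 2 ≤ ((σ : ℂ) + ω * Complex.I).re := by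
    simp only [Complex.add_re, Complex.ofReal_re, Complex.re_ofReal_mul, Complex.I_re]
    linarith
  rw [Matrix.mul_assoc]
  exact hric.isHurwitz_map_ofReal .one (posSemidef_conjTranspose_mul_self C) hPpos.posSemidef hshift
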